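/- Let a : ℕ → ℝ be a multiplicative function such that ∑_{p ≤ x over primes} a(p)⁴ ∼ α π(x) for some constant α ≥ 2. Then there exists c > 0 such that a(n) = Ω(exp(c log n / log log n)); that is, limsup_{n→∞} |a(n)| / exp(c log n / log log n) > 0. -/

import Mathlib

open Finset Filter Asymptotics

/-- A multiplicative function distributes over products of distinct primes. -/
lemma map_prod_primes_of_multiplicative (a : ℕ → ℝ) (hone : a 1 = 1)
    (hmult : ∀ m n : ℕ, Nat.Coprime m n → a (m * n) = a m * a n)
    (S : Finset ℕ) (hS : ∀ p ∈ S, p.Prime) : a (∏ p ∈ S, p) = ∏ p ∈ S, a p := by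
  induction S using Finset.induction_on with
  | empty => simpa using hone
  | insert q S hq ih =>
    have hprime : ∀ p ∈ S, p.Prime := fun p hp => hS p (mem_insert_of_mem hp)
    rw [prod_insert hq, prod_insert hq, hmult, ih hprime]
    refine Nat.Coprime.prod_right fun p hp => ?_
    refine (Nat.coprime_primes (hS q (mem_insert_self q S)) (hprime p hp)).2 ?_
    rintro rfl
    exact hq hp

/-- A weak form of Chebyshev's lower bound: `π(n)` eventually exceeds `C + 4 n ^ (3 / 4)`. -/
lemma eventually_add_four_mul_rpow_le_card_primes (C : ℝ) : ∀ᶠ n : ℕ in atTop,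
    C + 4 * ((n : ℝ) ^ (1 / 8 : ℝ)) ^ 6
      ≤ (((Finset.range (n + 1)).filter Nat.Prime).card : ℝ) := by
  have hy : Tendsto (fun n : ℕ => (n : ℝ) ^ (1 / 8 : ℝ)) atTop atTop :=
    (tendsto_rpow_atTop (by norm_num)).comp tendsto_natCast_atTop_atTop
  have hlog : ∀ᶠ n : ℕ in atTop, Real.log n ≤ (n : ℝ) ^ (1 / 8 : ℝ) := by
    have h := ((isLittleO_log_rpow_atTop (r := 1 / 8) (by norm_num)).bound
      one_pos).natCast_atTop
    filter_upwards [h] with n hn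
    rw [Real.norm_eq_abs, Real.norm_eq_abs, one_mul,
      abs_of_nonneg (Real.rpow_nonneg (Nat.cast_nonneg n) _)] at hn
    exact (le_abs_self _).trans hn
  filter_upwards [hlog, hy.eventually_ge_atTop (20 + 4 * |C|), eventually_ge_atTop 2]
    with n hlogn hyn hn2
  set y : ℝ := (n : ℝ) ^ (1 / 8 : ℝ) with hydef
  have hpow : y ^ 8 = n := by
    rw [hydef, ← Real.rpow_natCast, ← Real.rpow_mul (Nat.cast_nonneg n)]
    norm_num
  have hcard : (((Finset.range (n + 1)).filter Nat.Prime).card : ℝ) = Nat.primeCounting n := by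
    rw [Nat.primeCounting, Nat.primeCounting', Nat.count_eq_card_filter_range]
  rw [hcard]
  have hn2' : (2 : ℝ) ≤ n := by exact_mod_cast hn2
  have hlogpos : 0 < Real.log n := Real.log_pos (by linarith)
  have hpi := Chebyshev.pi_ge n
  rw [div_le_iff₀ hlogpos] at hpi
  have hsucc : Real.log ((n : ℝ) + 1) ≤ 2 * y := by
    have h1 : Real.log ((n : ℝ) + 1) ≤ Real.log ((n : ℝ) ^ 2) :=
      Real.log_le_log (by linarith) (by nlinarith)
    rw [Real.log_pow] at h1
    push_cast at h1
    linarith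
  have hlog2 := Real.log_two_gt_d9
  have hCabs := abs_nonneg C
  have hy20 : 20 ≤ y := by linarith
  have hy0 : 0 < y := by linarith
  have hy7 : 8 ≤ y ^ 7 := by
    calc (8 : ℝ) ≤ 20 ^ 7 := by norm_num
      _ ≤ y ^ 7 := by gcongr
  have hpiy : (y ^ 7 / 4) * y ≤ (Nat.primeCounting n : ℝ) * y := by
    calc (y ^ 7 / 4) * y ≤ y ^ 8 * (1 / 2) - 2 * y := by nlinarith
      _ ≤ n * Real.log 2 - Real.log ((n : ℝ) + 1) := by
        rw [hpow]; nlinarith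
      _ ≤ _ := hpi
      _ ≤ _ := by gcongr
  have hpi7 := le_of_mul_le_mul_right hpiy hy0
  have hy6 : 1 ≤ y ^ 6 := one_le_pow₀ (by linarith)
  have := le_abs_self C
  nlinarith [mul_le_mul_of_nonneg_left hyn (by positivity : 0 ≤ y ^ 6)]

/-- If `a(p)⁴ ≤ p^{1/4}` for all large primes, then there are at least `n^{1/2}` primes
`p ≤ n` with `a(p)⁴ ≥ 3/2`. -/
lemma eventually_rpow_le_card_large_primes (a : ℕ → ℝ) (α : ℝ) (hα : 2 ≤ α)
    (h4 : (fun x : ℕ => ∑ p ∈ (Finset.range (x + 1)).filter Nat.Prime, (a p) ^ 4)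
        ~[atTop] fun x : ℕ => α * (((Finset.range (x + 1)).filter Nat.Prime).card : ℝ))
    (P : ℕ) (hP : ∀ p ≥ P, p.Prime → a p ^ 4 ≤ ((p : ℝ) ^ (1 / 8 : ℝ)) ^ 2) :
    ∀ᶠ n : ℕ in atTop, ((n : ℝ) ^ (1 / 8 : ℝ)) ^ 4 ≤
      ((((Finset.range (n + 1)).filter Nat.Prime).filter (fun p => 3 / 2 ≤ a p ^ 4)).card : ℝ) := by
  set C : ℝ := ∑ p ∈ Finset.range P, a p ^ 4 with hC
  have hsmall := h4.isLittleO.bound (c := 1 / 8) (by norm_num)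
  filter_upwards [hsmall, eventually_add_four_mul_rpow_le_card_primes (4 * C),
    eventually_ge_atTop 1] with n hsum hpi hn
  set y : ℝ := (n : ℝ) ^ (1 / 8 : ℝ) with hydef
  set Q := (Finset.range (n + 1)).filter Nat.Prime with hQ
  set S := Q.filter (fun p => 3 / 2 ≤ a p ^ 4) with hS
  have hn' : (1 : ℝ) ≤ n := by exact_mod_cast hn
  have hy0 : 0 < y := Real.rpow_pos_of_pos (by linarith) _
  have hcard0 : (0 : ℝ) ≤ Q.card := Nat.cast_nonneg _
  have hlower : 7 / 4 * (Q.card : ℝ) ≤ ∑ p ∈ Q, a p ^ 4 := by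
    simp only [Pi.sub_apply, Real.norm_eq_abs] at hsum
    rw [abs_of_nonneg (by positivity : 0 ≤ α * (Q.card : ℝ))] at hsum
    have := (abs_le.1 hsum).1
    nlinarith [mul_le_mul_of_nonneg_right hα hcard0]
  have hupper : ∑ p ∈ Q, a p ^ 4 ≤ 3 / 2 * Q.card + (C + S.card * y ^ 2) := by
    have hpt : ∀ p ∈ Q, a p ^ 4 ≤ 3 / 2 + ((if p < P then a p ^ 4 else 0)
        + (if 3 / 2 ≤ a p ^ 4 then y ^ 2 else 0)) := by
      intro p hp
      have h0 : 0 ≤ a p ^ 4 := by positivity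
      have hy2 : 0 ≤ y ^ 2 := by positivity
      obtain ⟨hpn, hprime⟩ := mem_filter.1 hp
      have hle : p ≤ n := Nat.lt_succ_iff.1 (mem_range.1 hpn)
      split_ifs with h1 h2 h2
      · linarith
      · linarith
      · have h3 := hP p (not_lt.1 h1) hprime
        have h5 : ((p : ℝ) ^ (1 / 8 : ℝ)) ^ 2 ≤ y ^ 2 := by
          rw [hydef]
          gcongr
        linarith
      · linarith
    refine (sum_le_sum hpt).trans ?_
    rw [sum_add_distrib, sum_add_distrib, sum_const, nsmul_eq_mul, ← sum_filter, ← sum_filter,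
      sum_const, nsmul_eq_mul]
    have hCle : ∑ p ∈ Q.filter (fun p => p < P), a p ^ 4 ≤ C := by
      refine sum_le_sum_of_subset_of_nonneg (fun p hp => ?_) (fun p _ _ => by positivity)
      exact mem_range.2 (mem_filter.1 hp).2
    linarith
  have hmain : y ^ 4 * y ^ 2 ≤ S.card * y ^ 2 := by
    have : y ^ 4 * y ^ 2 = y ^ 6 := by ring
    linarith
  exact le_of_mul_le_mul_right hmain (by positivity)

/-- If `a : ℕ → ℝ` is multiplicative (`a(1) = 1`, `a(mn) = a(m)a(n)` for coprime
`m, n`) and `∑_{p ≤ x} a(p)⁴ ∼ α π(x)` for some `α ≥ 2`, then there is `c > 0` with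
`a(n) = Ω(exp(c log n / log log n))`. -/
theorem omega_result (a : ℕ → ℝ) (α : ℝ) (hα : 2 ≤ α)
    (hone : a 1 = 1)
    (hmult : ∀ m n : ℕ, Nat.Coprime m n → a (m * n) = a m * a n)
    (h4 : (fun x : ℕ => ∑ p ∈ (Finset.range (x + 1)).filter Nat.Prime, (a p) ^ 4)
        ~[atTop] fun x : ℕ => α * (((Finset.range (x + 1)).filter Nat.Prime).card : ℝ)) :
    ∃ c > 0, ∃ A > 0, ∀ N : ℕ, ∃ n ≥ N,
      A * Real.exp (c * Real.log n / Real.log (Real.log n)) ≤ |a n| := by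
  have hlog32 : 0 < Real.log (3 / 2) := Real.log_pos (by norm_num)
  have habs4 : ∀ p, |a p| ^ 4 = a p ^ 4 := fun p => by
    rw [← abs_pow, abs_of_nonneg (by positivity)]
  have hloglog : Tendsto (fun n : ℕ => Real.log (Real.log n)) atTop atTop :=
    Real.tendsto_log_atTop.comp (Real.tendsto_log_atTop.comp tendsto_natCast_atTop_atTop)
  refine ⟨Real.log (3 / 2) / 16, by positivity, 1, one_pos, fun N => ?_⟩
  simp only [one_mul]
  by_cases hcase : ∃ P : ℕ, ∀ p ≥ P, p.Prime → a p ^ 4 ≤ ((p : ℝ) ^ (1 / 8 : ℝ)) ^ 2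
  · obtain ⟨P, hP⟩ := hcase
    have hy : Tendsto (fun n : ℕ => (n : ℝ) ^ (1 / 8 : ℝ)) atTop atTop :=
      (tendsto_rpow_atTop (by norm_num)).comp tendsto_natCast_atTop_atTop
    have hlogn : Tendsto (fun n : ℕ => Real.log n) atTop atTop :=
      Real.tendsto_log_atTop.comp tendsto_natCast_atTop_atTop
    obtain ⟨n, hT, hyN, hn, hlarge⟩ := ((eventually_rpow_le_card_large_primes a α hα h4 P hP).and
      ((hy.eventually_ge_atTop (N + 1)).and ((eventually_ge_atTop 2).and
        (hlogn.eventually_ge_atTop 4)))).exists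
    set y : ℝ := (n : ℝ) ^ (1 / 8 : ℝ) with hydef
    set S := ((Finset.range (n + 1)).filter Nat.Prime).filter (fun p => 3 / 2 ≤ a p ^ 4) with hS
    have hprime : ∀ p ∈ S, p.Prime := fun p hp => (mem_filter.1 (mem_filter.1 hp).1).2
    have hle : ∀ p ∈ S, p ≤ n := fun p hp =>
      Nat.lt_succ_iff.1 (mem_range.1 (mem_filter.1 (mem_filter.1 hp).1).1)
    have hn0 : (0 : ℝ) < n := by exact_mod_cast (by omega : 0 < n)
    have hy1 : 1 ≤ y := by
      have : (0 : ℝ) ≤ N := Nat.cast_nonneg N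
      linarith
    have hTN : (N : ℝ) ≤ S.card := by
      have : y ≤ y ^ 4 := le_self_pow₀ hy1 (by norm_num)
      linarith
    have hTpos : (0 : ℝ) < S.card := lt_of_lt_of_le (by positivity) hT
    have hlow : 2 ^ S.card ≤ ∏ p ∈ S, p :=
      Finset.pow_card_le_prod S (fun p => p) 2 fun p hp => (hprime p hp).two_le
    have hhigh : ∏ p ∈ S, p ≤ n ^ S.card := Finset.prod_le_pow_card S (fun p => p) n hle
    refine ⟨∏ p ∈ S, p, ?_, ?_⟩
    · have h1 : N ≤ S.card := by exact_mod_cast hTN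
      exact (h1.trans Nat.lt_two_pow_self.le).trans hlow
    · have hval : Real.exp (S.card * (Real.log (3 / 2) / 4)) ≤ |a (∏ p ∈ S, p)| := by
        rw [map_prod_primes_of_multiplicative a hone hmult S hprime, abs_prod, Real.exp_nat_mul]
        rw [← prod_const]
        refine prod_le_prod (fun p _ => (Real.exp_pos _).le) fun p hp => ?_
        refine le_of_pow_le_pow_left₀ (by norm_num : 4 ≠ 0) (abs_nonneg _) ?_
        rw [habs4, ← Real.exp_nat_mul]
        refine le_trans (le_of_eq ?_) (mem_filter.1 hp).2
        push_cast
        rw [mul_div_cancel₀ _ (by norm_num), Real.exp_log (by norm_num)]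
      refine (Real.exp_le_exp.2 ?_).trans hval
      set M := ∏ p ∈ S, p with hM
      have hlow' : (2 : ℝ) ^ S.card ≤ M := by exact_mod_cast hlow
      have hhigh' : (M : ℝ) ≤ n ^ S.card := by exact_mod_cast hhigh
      have hMpos : (0 : ℝ) < M := lt_of_lt_of_le (by positivity) hlow'
      have hlogM : Real.log M ≤ S.card * Real.log n := by
        rw [← Real.log_pow]
        exact Real.log_le_log hMpos hhigh'
      have hlogM' : S.card * Real.log 2 ≤ Real.log M := by
        rw [← Real.log_pow]
        exact Real.log_le_log (by positivity) hlow'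
      have hll : Real.log n / 4 ≤ Real.log (Real.log M) := by
        have h1 : y ^ 4 / 2 ≤ Real.log M := by
          have := Real.log_two_gt_d9
          nlinarith
        have h2 : Real.log (y ^ 4 / 2) ≤ Real.log (Real.log M) :=
          Real.log_le_log (by positivity) h1
        rw [Real.log_div (by positivity) (by norm_num), Real.log_pow, hydef,
          Real.log_rpow hn0] at h2
        have := Real.log_two_lt_d9
        push_cast at h2
        linarith
      rw [div_le_iff₀ (by linarith)]
      calc Real.log (3 / 2) / 16 * Real.log M
          ≤ Real.log (3 / 2) / 16 * (S.card * Real.log n) := by gcongr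
        _ = S.card * (Real.log (3 / 2) / 4) * (Real.log n / 4) := by ring
        _ ≤ _ := by gcongr
  · push Not at hcase
    obtain ⟨K, hK⟩ := eventually_atTop.1 (hloglog.eventually_ge_atTop 1)
    obtain ⟨p, hp, hprime, hlt⟩ := hcase (max N K)
    refine ⟨p, (le_max_left _ _).trans hp, ?_⟩
    have hl := hK p ((le_max_right _ _).trans hp)
    have hp0 : (0 : ℝ) < p := by exact_mod_cast hprime.pos
    have hlogp : 0 ≤ Real.log p := Real.log_natCast_nonneg p
    have hexp : Real.exp (Real.log p / 16) ≤ |a p| := by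
      refine le_of_pow_le_pow_left₀ (by norm_num : 4 ≠ 0) (abs_nonneg _) ?_
      rw [habs4, ← Real.exp_nat_mul]
      refine le_trans (le_of_eq ?_) hlt.le
      rw [Real.rpow_def_of_pos hp0, ← Real.exp_nat_mul]
      congr 1
      push_cast
      ring
    refine (Real.exp_le_exp.2 ?_).trans hexp
    rw [div_le_iff₀ (by linarith)]
    have h32 : Real.log (3 / 2) ≤ 1 := by
      have := Real.log_le_sub_one_of_pos (by norm_num : (0 : ℝ) < 3 / 2)
      linarith
    nlinarith [mul_le_mul_of_nonneg_right h32 hlogp, mul_le_mul_of_nonneg_left hl hlogp]
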